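/- arXiv:1704.05381 — 3 statements merged into one kernel-verified Lean document; each statement's English description precedes it below -/
import Mathlib

section
/- For every β with 0 ≤ β < 1/4 there is a constant C_β < ∞ such that for every z ∈ bD: ∫_{bD} (Re Δ(w,z))^{−(1+β)} dH³(w) ≤ C_β. -/
open MeasureTheory Complex

noncomputable section

/-- `ℂ²` with the Euclidean metric. -/
abbrev C2 := EuclideanSpace ℂ (Fin 2)

instance : MeasurableSpace C2 := borel _
instance : BorelSpace C2 := ⟨rfl⟩

/-- The defining function `ρ(z) = |z₂|² + (Re z₁)² + (Im z₁)⁴ − 1`. -/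
def rho (z : C2) : ℝ := ‖z 1‖ ^ 2 + (z 0).re ^ 2 + (z 0).im ^ 4 - 1

/-- The boundary `bD = {ρ = 0}`. -/
def bD : Set C2 := {z | rho z = 0}

/-- The Cauchy–Leray denominator
`Δ(w,z) = (u₁ − 2i v₁³)(w₁ − z₁) + conj(w₂)(w₂ − z₂)`. -/
def Delta (w z : C2) : ℂ :=
  (((w 0).re : ℂ) - 2 * I * ((w 0).im : ℂ) ^ 3) * (w 0 - z 0)
    + (starRingEnd ℂ) (w 1) * (w 1 - z 1)

/-!
In the real coordinates `x = (u₁, v₁, u₂, v₂)` of `w` the boundary is the superellipsoid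
`∑ₖ xₖ ^ pₖ = 1` with `p = (2, 4, 2, 2)`, and `Re Δ(w, z)` is half the pairing of the gradient at
`x` with `x - y`, `y` being the coordinates of `z`. Even powers are uniformly convex, so this
pairing controls every coordinate separately: `Re Δ ≥ ∑ₖ ((xₖ - yₖ) / 2) ^ pₖ`. On a cap where
`xᵢ` stays away from zero the other coordinates form a Lipschitz chart, and weighting their bounds
gives `(Re Δ) ^ (-s) ≤ ∏_{j ≠ i} |(xⱼ - yⱼ) / 2| ^ (-θ)` with `θ = s / ∑_{j ≠ i} 1 / pⱼ`. The
right-hand side is integrable, uniformly in `y`, as soon as `θ < 1`; the worst caps have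
`∑_{j ≠ i} 1 / pⱼ = 1/4 + 1/2 + 1/2 = 5/4`, which is the threshold for `s = 1 + β`.
-/

open Set Metric
open scoped ENNReal NNReal

section SingularKernels

variable {ι : Type*}

theorem prod_rpow_eq_rpow_sum_of_nonneg (s : Finset ι) {q : ι → ℝ} (hq : ∀ j ∈ s, 0 ≤ q j)
    (G : ℝ≥0∞) : ∏ j ∈ s, G ^ q j = G ^ ∑ j ∈ s, q j := by
  induction s using Finset.cons_induction with
  | empty => simp
  | cons j s hj ih =>
    rw [Finset.forall_mem_cons] at hq
    rw [Finset.prod_cons, Finset.sum_cons, ih hq.2,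
      ENNReal.rpow_add_of_nonneg _ _ hq.1 (Finset.sum_nonneg hq.2)]

variable [Fintype ι]

theorem rpow_neg_mul_sum_le_prod_rpow_neg {G : ℝ≥0∞} {a : ι → ℝ≥0∞} {q : ι → ℝ} {θ : ℝ}
    (hG : G ≠ ∞) (hθ : 0 ≤ θ) (hq : ∀ j, 0 ≤ q j) (ha : ∀ j, a j ≤ G ^ q j) :
    G ^ (-(θ * ∑ j, q j)) ≤ ∏ j, a j ^ (-θ) := by
  have ha_top : ∀ j, a j ≠ ∞ := fun j =>
    ((ha j).trans_lt (ENNReal.rpow_lt_top_of_nonneg (hq j) hG)).ne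
  have hprod : (∏ j, a j) ^ θ ≤ G ^ (θ * ∑ j, q j) :=
    calc (∏ j, a j) ^ θ ≤ (∏ j, G ^ q j) ^ θ := by
          gcongr with j
          exact ha j
      _ = G ^ (θ * ∑ j, q j) := by
          rw [prod_rpow_eq_rpow_sum_of_nonneg _ fun j _ => hq j, ← ENNReal.rpow_mul, mul_comm]
  rw [ENNReal.prod_rpow_of_ne_top fun j _ => ha_top j, ENNReal.rpow_neg, ENNReal.rpow_neg]
  exact ENNReal.inv_le_inv.2 hprod

theorem lintegral_ball_prod_enorm_rpow_neg_lt_top {θ : ι → ℝ} (hθ : ∀ i, θ i < 1) {r : ℝ}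
    (hr : 0 < r) :
    ∫⁻ x in ball (0 : ι → ℝ) r, ∏ i, ‖x i‖ₑ ^ (-θ i) < ∞ := by
  have hbox : (volume : Measure (ι → ℝ)).restrict (ball 0 r)
      = Measure.pi fun _ : ι => volume.restrict (ball (0 : ℝ) r) := by
    rw [ball_pi _ hr, volume_pi, Measure.restrict_pi_pi]
    rfl
  have hfactor (i : ι) : IntegrableOn (fun t : ℝ => ‖t‖ ^ (-θ i)) (ball 0 r) :=
    integrableOn_ball_of_norm_le_rpow (C := 1) (by simp) (by simpa using hθ i)
      (.of_forall fun t => by rw [Real.norm_of_nonneg (by positivity), one_mul])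
      (by fun_prop : Measurable _).aestronglyMeasurable
  have hint : Integrable (fun x : ι → ℝ => ∏ i, ‖x i‖ ^ (-θ i))
      (volume.restrict (ball 0 r)) := by
    rw [hbox]
    exact Integrable.fintype_prod hfactor
  have hne : ∀ᵐ x : ι → ℝ ∂volume.restrict (ball 0 r), ∀ i, x i ≠ 0 :=
    ae_restrict_of_ae (ae_all_iff.2 fun i => Measure.ae_eval_ne _ i 0)
  refine (lintegral_congr_ae ?_).trans_lt hint.2
  filter_upwards [hne] with x hx
  rw [← ofReal_norm, Real.norm_of_nonneg (by positivity),
    ENNReal.ofReal_prod_of_nonneg fun i _ => by positivity]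
  refine Finset.prod_congr rfl fun i _ => ?_
  rw [← ofReal_norm, ENNReal.ofReal_rpow_of_pos (norm_pos_iff.2 (hx i))]

end SingularKernels

section HausdorffMeasure

variable {X Y : Type*} [EMetricSpace X] [MeasurableSpace X] [BorelSpace X]
  [EMetricSpace Y] [MeasurableSpace Y] [BorelSpace Y] {d : ℝ} {K : ℝ≥0} {f : X → Y} {P : Set X}
  {T : Set Y}

theorem map_restrict_hausdorffMeasure_le (hd : 0 ≤ d) (hf : Measurable f)
    (hfK : AntilipschitzWith K (P.domRestrict f)) (hPT : MapsTo f P T) :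
    Measure.map f ((μH[d] : Measure X).restrict P)
      ≤ ((K : ℝ≥0∞) ^ d) • (μH[d] : Measure Y).restrict T := by
  refine Measure.le_iff.2 fun A hA => ?_
  have hpre : f ⁻¹' A ∩ P = (↑) '' (P.domRestrict f ⁻¹' (A ∩ T)) := by
    ext w
    constructor
    · exact fun ⟨hwA, hwP⟩ => ⟨⟨w, hwP⟩, ⟨hwA, hPT hwP⟩, rfl⟩
    · rintro ⟨⟨v, hvP⟩, ⟨hvA, -⟩, rfl⟩
      exact ⟨hvA, hvP⟩
  rw [Measure.map_apply hf hA, Measure.restrict_apply (hf hA), hpre,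
    isometry_subtype_coe.hausdorffMeasure_image (.inl hd), Measure.smul_apply,
    Measure.restrict_apply hA, smul_eq_mul]
  exact hfK.hausdorffMeasure_preimage_le hd _

theorem setLIntegral_comp_hausdorffMeasure_le (hd : 0 ≤ d) (hf : Measurable f)
    (hfK : AntilipschitzWith K (P.domRestrict f)) (hPT : MapsTo f P T) {g : Y → ℝ≥0∞}
    (hg : Measurable g) :
    ∫⁻ w in P, g (f w) ∂μH[d] ≤ (K : ℝ≥0∞) ^ d * ∫⁻ x in T, g x ∂μH[d] :=
  calc ∫⁻ w in P, g (f w) ∂μH[d]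
      = ∫⁻ x, g x ∂Measure.map f ((μH[d] : Measure X).restrict P) := (lintegral_map hg hf).symm
    _ ≤ ∫⁻ x, g x ∂(((K : ℝ≥0∞) ^ d) • (μH[d] : Measure Y).restrict T) :=
        lintegral_mono' (map_restrict_hausdorffMeasure_le hd hf hfK hPT) le_rfl
    _ = (K : ℝ≥0∞) ^ d * ∫⁻ x in T, g x ∂μH[d] := by rw [lintegral_smul_measure, smul_eq_mul]

theorem setLIntegral_prod_enorm_sub_rpow_neg_le {κ : Type*} [Fintype κ] {π : X → κ → ℝ}
    (hπ : Measurable π) (hπK : AntilipschitzWith K (P.domRestrict π)) {c : κ → ℝ} {r : ℝ}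
    (hPc : MapsTo π P (ball c r)) (θ : κ → ℝ) :
    ∫⁻ w in P, ∏ j, ‖π w j - c j‖ₑ ^ (-θ j) ∂μH[Fintype.card κ]
      ≤ (K : ℝ≥0∞) ^ (Fintype.card κ : ℝ) * ∫⁻ x in ball (0 : κ → ℝ) r, ∏ j, ‖x j‖ₑ ^ (-θ j) := by
  have hcenter : MeasurePreserving (fun x : κ → ℝ => x - c) := measurePreserving_sub_right _ c
  have hpre : (fun x : κ → ℝ => x - c) ⁻¹' ball 0 r = ball c r := by
    ext x
    simp [dist_eq_norm]
  calc ∫⁻ w in P, ∏ j, ‖π w j - c j‖ₑ ^ (-θ j) ∂μH[Fintype.card κ]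
      ≤ (K : ℝ≥0∞) ^ (Fintype.card κ : ℝ) * ∫⁻ x in ball c r, ∏ j, ‖x j - c j‖ₑ ^ (-θ j) := by
        rw [← hausdorffMeasure_pi_real]
        exact setLIntegral_comp_hausdorffMeasure_le (Nat.cast_nonneg _) hπ hπK hPc
          (g := fun x => ∏ j, ‖x j - c j‖ₑ ^ (-θ j)) (by fun_prop)
    _ = (K : ℝ≥0∞) ^ (Fintype.card κ : ℝ) * ∫⁻ x in ball (0 : κ → ℝ) r, ∏ j, ‖x j‖ₑ ^ (-θ j) := by
        rw [← hpre, ← hcenter.setLIntegral_comp_preimage (s := ball 0 r)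
          (f := fun x => ∏ j, ‖x j‖ₑ ^ (-θ j)) measurableSet_ball (by fun_prop)]
        simp only [Pi.sub_apply]

end HausdorffMeasure

section Powers

variable {n : ℕ} {a b δ : ℝ}

theorem add_mul_sub_le_of_convexOn {s : Set ℝ} {f : ℝ → ℝ} {f' x y : ℝ} (hf : ConvexOn ℝ s f)
    (hx : x ∈ s) (hy : y ∈ s) (hf' : HasDerivAt f f' x) : f x + f' * (y - x) ≤ f y := by
  rcases lt_trichotomy x y with hxy | rfl | hyx
  · have hslope := hf.le_slope_of_hasDerivAt hx hy hxy hf'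
    rw [slope_def_field, le_div_iff₀ (sub_pos.2 hxy)] at hslope
    linarith
  · simp
  · have hslope := hf.slope_le_of_hasDerivAt hy hx hyx hf'
    rw [slope_def_field, div_le_iff₀ (sub_pos.2 hyx)] at hslope
    linarith

theorem half_add_pow_add_half_sub_pow_le (hn : Even n) (hn0 : n ≠ 0) (a b : ℝ) :
    ((a + b) / 2) ^ n + ((a - b) / 2) ^ n ≤ (a ^ n + b ^ n) / 2 := by
  obtain ⟨m, rfl⟩ := hn.two_dvd
  have hm : m ≠ 0 := by rintro rfl; simp at hn0
  have hconv : (1 / 2 * a ^ 2 + 1 / 2 * b ^ 2) ^ m ≤ 1 / 2 * (a ^ 2) ^ m + 1 / 2 * (b ^ 2) ^ m :=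
    (convexOn_pow m).2 (sq_nonneg a) (sq_nonneg b) (by norm_num) (by norm_num) (by norm_num)
  simp only [pow_mul]
  calc (((a + b) / 2) ^ 2) ^ m + (((a - b) / 2) ^ 2) ^ m
      ≤ (((a + b) / 2) ^ 2 + ((a - b) / 2) ^ 2) ^ m :=
        pow_add_pow_le (sq_nonneg _) (sq_nonneg _) hm
    _ = (1 / 2 * a ^ 2 + 1 / 2 * b ^ 2) ^ m := by ring
    _ ≤ ((a ^ 2) ^ m + (b ^ 2) ^ m) / 2 := by linarith

-- Strict convexity at the scale `(a - b) ^ n`: bound `b ^ n` below by the uniform convexity of the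
-- segment from `a` to `b`, and its midpoint value by the tangent line at `a`.
theorem pow_sub_pow_add_two_mul_half_sub_pow_le (hn : Even n) (hn0 : n ≠ 0) (a b : ℝ) :
    a ^ n - b ^ n + 2 * ((a - b) / 2) ^ n ≤ n * a ^ (n - 1) * (a - b) := by
  have hmid := half_add_pow_add_half_sub_pow_le hn hn0 a b
  have htangent := add_mul_sub_le_of_convexOn hn.convexOn_pow (mem_univ a)
    (mem_univ ((a + b) / 2)) (hasDerivAt_pow n a)
  linarith

theorem pow_pred_mul_abs_sub_le_abs_pow_sub_pow (hn0 : n ≠ 0) (hδ : 0 ≤ δ) (ha : δ ≤ a)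
    (hb : δ ≤ b) : δ ^ (n - 1) * |a - b| ≤ |a ^ n - b ^ n| := by
  have ha0 := hδ.trans ha
  have hb0 := hδ.trans hb
  have hsum : δ ^ (n - 1) ≤ ∑ i ∈ Finset.range n, a ^ i * b ^ (n - 1 - i) :=
    calc δ ^ (n - 1) ≤ a ^ (n - 1) * b ^ (n - 1 - (n - 1)) := by
          simpa using pow_le_pow_left₀ hδ ha (n - 1)
      _ ≤ ∑ i ∈ Finset.range n, a ^ i * b ^ (n - 1 - i) :=
          Finset.single_le_sum (f := fun i => a ^ i * b ^ (n - 1 - i))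
            (fun i _ => by positivity) (Finset.mem_range.2 (by omega))
  rw [← geom_sum₂_mul, abs_mul]
  gcongr
  exact hsum.trans (le_abs_self _)

theorem abs_pow_sub_pow_le_mul_abs_sub (ha : |a| ≤ 1) (hb : |b| ≤ 1) :
    |a ^ n - b ^ n| ≤ n * |a - b| := by
  have hmax : max |a| |b| ^ (n - 1) ≤ 1 := pow_le_one₀ (by positivity) (max_le ha hb)
  calc |a ^ n - b ^ n| ≤ |a - b| * n * max |a| |b| ^ (n - 1) := abs_pow_sub_pow_le ..
    _ ≤ |a - b| * n * 1 := by gcongr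
    _ = n * |a - b| := by ring

end Powers

section Superellipsoid

variable {ι : Type*} {p : ι → ℕ} {x y : ι → ℝ} {i : ι} {ε : ℤˣ}

/-- The coordinates other than the `i`-th, halved to match the terms `((xₖ - yₖ) / 2) ^ pₖ` that
bound `lerayGap` from below. -/
def halfProj (i : ι) (x : ι → ℝ) (j : {j // j ≠ i}) : ℝ := x j / 2

theorem measurable_halfProj (i : ι) : Measurable (halfProj i) := by
  unfold halfProj
  fun_prop

variable [Fintype ι]

/-- The hypersurface `∑ₖ xₖ ^ pₖ = 1` in `ℝ^ι`; it bounds a convex body when all `pₖ` are even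
and positive. -/
def superellipsoid (p : ι → ℕ) : Set (ι → ℝ) := {x | ∑ k, x k ^ p k = 1}

/-- Half the pairing of the gradient of `∑ₖ xₖ ^ pₖ` at `x` with `x - y`. The factor `1 / 2` makes
it the real part of the Cauchy–Leray denominator, since `Re ⟨∂ρ(w), h⟩ = dρ(w)(h) / 2`. -/
def lerayGap (p : ι → ℕ) (x y : ι → ℝ) : ℝ :=
  (∑ k, p k * x k ^ (p k - 1) * (x k - y k)) / 2

/-- The part of the superellipsoid on which the `i`-th coordinate has sign `ε` and is bounded away
from zero, so that the remaining coordinates are a bi-Lipschitz chart. -/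
def superellipsoidCap (p : ι → ℕ) (i : ι) (ε : ℤˣ) : Set (ι → ℝ) :=
  {x ∈ superellipsoid p | (Fintype.card ι : ℝ)⁻¹ ≤ (ε : ℤ) * x i}

theorem measurable_lerayGap_left (p : ι → ℕ) (y : ι → ℝ) :
    Measurable fun x => lerayGap p x y := by
  unfold lerayGap
  fun_prop

theorem measurableSet_superellipsoid (p : ι → ℕ) : MeasurableSet (superellipsoid p) :=
  measurableSet_eq_fun (f := fun x : ι → ℝ => ∑ k, x k ^ p k) (by fun_prop) measurable_const

theorem measurableSet_superellipsoidCap (p : ι → ℕ) (i : ι) (ε : ℤˣ) :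
    MeasurableSet (superellipsoidCap p i ε) :=
  (measurableSet_superellipsoid p).inter
    (measurableSet_le measurable_const ((measurable_pi_apply i).const_mul _))

theorem abs_le_one_of_mem_superellipsoid (hp : ∀ k, Even (p k)) (hp0 : ∀ k, p k ≠ 0)
    (hx : x ∈ superellipsoid p) (k : ι) : |x k| ≤ 1 := by
  have hk : x k ^ p k ≤ 1 :=
    hx ▸ Finset.single_le_sum (fun j _ => (hp j).pow_nonneg (x j)) (Finset.mem_univ k)
  rwa [← (hp k).pow_abs, pow_le_one_iff_of_nonneg (abs_nonneg _) (hp0 k)] at hk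

theorem exists_inv_card_le_abs_of_mem_superellipsoid (hp : ∀ k, Even (p k)) (hp0 : ∀ k, p k ≠ 0)
    (hx : x ∈ superellipsoid p) : ∃ k, (Fintype.card ι : ℝ)⁻¹ ≤ |x k| := by
  by_contra! hsmall
  have hle : ∀ k, x k ^ p k ≤ |x k| := fun k =>
    (hp k).pow_abs (x k) ▸ pow_le_of_le_one (abs_nonneg _)
      (abs_le_one_of_mem_superellipsoid hp hp0 hx k) (hp0 k)
  have hne : (Finset.univ : Finset ι).Nonempty := by
    rw [Finset.nonempty_iff_ne_empty]
    intro hempty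
    have hsum : ∑ k, x k ^ p k = 1 := hx
    simp [hempty] at hsum
  refine lt_irrefl (1 : ℝ) ?_
  calc (1 : ℝ) = ∑ k, x k ^ p k := hx.symm
    _ < ∑ _k : ι, (Fintype.card ι : ℝ)⁻¹ :=
        Finset.sum_lt_sum_of_nonempty hne fun k _ => (hle k).trans_lt (hsmall k)
    _ ≤ 1 := by simpa using mul_inv_le_one

theorem superellipsoid_subset_iUnion_cap (hp : ∀ k, Even (p k)) (hp0 : ∀ k, p k ≠ 0) :
    superellipsoid p ⊆ ⋃ q : ι × ℤˣ, superellipsoidCap p q.1 q.2 := by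
  intro x hx
  obtain ⟨k, hk⟩ := exists_inv_card_le_abs_of_mem_superellipsoid hp hp0 hx
  rcases le_abs.1 hk with hpos | hneg
  · exact mem_iUnion.2 ⟨(k, 1), hx, by simpa using hpos⟩
  · exact mem_iUnion.2 ⟨(k, -1), hx, by simpa using hneg⟩

theorem sum_half_sub_pow_le_lerayGap (hp : ∀ k, Even (p k)) (hp0 : ∀ k, p k ≠ 0)
    (hx : x ∈ superellipsoid p) (hy : y ∈ superellipsoid p) :
    ∑ k, ((x k - y k) / 2) ^ p k ≤ lerayGap p x y := by
  have hsum : ∑ k, x k ^ p k = ∑ k, y k ^ p k := hx.trans hy.symm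
  have hterms := Finset.sum_le_sum fun k (_ : k ∈ Finset.univ) =>
    pow_sub_pow_add_two_mul_half_sub_pow_le (hp k) (hp0 k) (x k) (y k)
  rw [Finset.sum_add_distrib, Finset.sum_sub_distrib, hsum, sub_self, zero_add,
    ← Finset.mul_sum] at hterms
  rw [lerayGap]
  linarith

theorem enorm_half_sub_le_lerayGap_rpow (hp : ∀ k, Even (p k)) (hp0 : ∀ k, p k ≠ 0)
    (hx : x ∈ superellipsoid p) (hy : y ∈ superellipsoid p) (k : ι) :
    ‖(x k - y k) / 2‖ₑ ≤ ENNReal.ofReal (lerayGap p x y) ^ (p k : ℝ)⁻¹ := by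
  have hk : ((x k - y k) / 2) ^ p k ≤ lerayGap p x y :=
    (Finset.single_le_sum (f := fun j => ((x j - y j) / 2) ^ p j)
      (fun j _ => (hp j).pow_nonneg _) (Finset.mem_univ k)).trans
      (sum_half_sub_pow_le_lerayGap hp hp0 hx hy)
  rw [ENNReal.le_rpow_inv_iff (by exact_mod_cast Nat.pos_of_ne_zero (hp0 k)),
    ENNReal.rpow_natCast, ← ofReal_norm, ← ENNReal.ofReal_pow (norm_nonneg _), Real.norm_eq_abs,
    (hp k).pow_abs]
  exact ENNReal.ofReal_le_ofReal hk

section DecidableEq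

variable [DecidableEq ι]

theorem abs_pow_sub_pow_le_sum_of_mem_superellipsoid (hp : ∀ k, Even (p k)) (hp0 : ∀ k, p k ≠ 0)
    (hx : x ∈ superellipsoid p) (hy : y ∈ superellipsoid p) (i : ι) :
    |x i ^ p i - y i ^ p i| ≤ ∑ j : {j // j ≠ i}, p j * |x j - y j| := by
  have hx1 := abs_le_one_of_mem_superellipsoid hp hp0 hx
  have hy1 := abs_le_one_of_mem_superellipsoid hp hp0 hy
  have hbalance : x i ^ p i - y i ^ p i = ∑ j : {j // j ≠ i}, (y j ^ p j - x j ^ p j) := by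
    have hsum : ∑ k, x k ^ p k = ∑ k, y k ^ p k := hx.trans hy.symm
    rw [Fintype.sum_eq_add_sum_subtype_ne _ i, Fintype.sum_eq_add_sum_subtype_ne _ i] at hsum
    rw [Finset.sum_sub_distrib]
    linarith
  calc |x i ^ p i - y i ^ p i| ≤ ∑ j : {j // j ≠ i}, |y j ^ p j - x j ^ p j| := by
        rw [hbalance]
        exact Finset.abs_sum_le_sum_abs _ _
    _ ≤ ∑ j : {j // j ≠ i}, p j * |x j - y j| := by
        gcongr with j
        rw [abs_sub_comm]
        exact abs_pow_sub_pow_le_mul_abs_sub (hx1 j) (hy1 j)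

theorem abs_sub_le_two_mul_dist_halfProj (x y : ι → ℝ) (j : {j // j ≠ i}) :
    |x j - y j| ≤ 2 * dist (halfProj i x) (halfProj i y) := by
  have hj : |x j / 2 - y j / 2| ≤ dist (halfProj i x) (halfProj i y) :=
    dist_le_pi_dist (halfProj i x) (halfProj i y) j
  rw [← sub_div, abs_div, abs_two] at hj
  linarith

theorem inv_card_pow_mul_abs_sub_le_of_mem_cap (hp : ∀ k, Even (p k)) (hp0 : ∀ k, p k ≠ 0)
    (hx : x ∈ superellipsoidCap p i ε) (hy : y ∈ superellipsoidCap p i ε) :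
    ((Fintype.card ι : ℝ)⁻¹) ^ (p i - 1) * |x i - y i|
      ≤ (∑ j : {j // j ≠ i}, (p j : ℝ)) * (2 * dist (halfProj i x) (halfProj i y)) := by
  have hpow : ((Fintype.card ι : ℝ)⁻¹) ^ (p i - 1) * |x i - y i| ≤ |x i ^ p i - y i ^ p i| := by
    have h := pow_pred_mul_abs_sub_le_abs_pow_sub_pow (hp0 i) (by positivity) hx.2 hy.2
    rcases Int.units_eq_one_or ε with rfl | rfl
    · simpa using h
    · simpa [(hp i).neg_pow, ← abs_neg (x i - y i), neg_add_eq_sub] using h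
  calc _ ≤ |x i ^ p i - y i ^ p i| := hpow
    _ ≤ ∑ j : {j // j ≠ i}, p j * |x j - y j| :=
        abs_pow_sub_pow_le_sum_of_mem_superellipsoid hp hp0 hx.1 hy.1 i
    _ ≤ ∑ j : {j // j ≠ i}, p j * (2 * dist (halfProj i x) (halfProj i y)) := by
        gcongr with j
        exact abs_sub_le_two_mul_dist_halfProj x y j
    _ = _ := (Finset.sum_mul ..).symm

theorem exists_antilipschitzWith_halfProj_cap (hp : ∀ k, Even (p k)) (hp0 : ∀ k, p k ≠ 0) (i : ι)
    (ε : ℤˣ) :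
    ∃ K : ℝ≥0, AntilipschitzWith K ((superellipsoidCap p i ε).domRestrict (halfProj i)) := by
  have hcard : 0 < (Fintype.card ι : ℝ) := by exact_mod_cast Fintype.card_pos_iff.2 ⟨i⟩
  set δ : ℝ := ((Fintype.card ι : ℝ)⁻¹) ^ (p i - 1)
  set M : ℝ := ∑ j : {j // j ≠ i}, (p j : ℝ)
  have hδ : 0 < δ := by positivity
  have hM : 0 ≤ M / δ := by positivity
  refine ⟨⟨2 * (1 + M / δ), by positivity⟩, .of_le_mul_dist fun ⟨x, hx⟩ ⟨y, hy⟩ => ?_⟩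
  change dist x y ≤ 2 * (1 + M / δ) * dist (halfProj i x) (halfProj i y)
  set D := dist (halfProj i x) (halfProj i y)
  have hD : 0 ≤ D := dist_nonneg
  refine (dist_pi_le_iff (by positivity)).2 fun k => ?_
  rw [Real.dist_eq]
  by_cases hk : k = i
  · subst hk
    have hcap : |x k - y k| ≤ M * (2 * D) / δ :=
      (le_div_iff₀' hδ).2 (inv_card_pow_mul_abs_sub_le_of_mem_cap hp hp0 hx hy)
    calc |x k - y k| ≤ M * (2 * D) / δ := hcap
      _ ≤ 2 * D + M * (2 * D) / δ := by linarith
      _ = 2 * (1 + M / δ) * D := by ring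
  · have hchart : |x k - y k| ≤ 2 * D := abs_sub_le_two_mul_dist_halfProj x y ⟨k, hk⟩
    calc |x k - y k| ≤ 2 * D := hchart
      _ ≤ 2 * D + M / δ * (2 * D) := le_add_of_nonneg_right (by positivity)
      _ = 2 * (1 + M / δ) * D := by ring

theorem mapsTo_halfProj_ball (hp : ∀ k, Even (p k)) (hp0 : ∀ k, p k ≠ 0)
    (hy : y ∈ superellipsoid p) (i : ι) :
    MapsTo (halfProj i) (superellipsoid p) (ball (halfProj i y) 2) := by
  intro x hx
  refine (dist_pi_lt_iff two_pos).2 fun j => ?_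
  have hxj := abs_le.1 (abs_le_one_of_mem_superellipsoid hp hp0 hx j)
  have hyj := abs_le.1 (abs_le_one_of_mem_superellipsoid hp hp0 hy j)
  rw [Real.dist_eq, halfProj, halfProj, abs_lt]
  constructor <;> linarith

theorem lerayGap_rpow_neg_le_prod_halfProj (hp : ∀ k, Even (p k)) (hp0 : ∀ k, p k ≠ 0)
    (hx : x ∈ superellipsoid p) (hy : y ∈ superellipsoid p) (i : ι) {θ : ℝ} (hθ : 0 ≤ θ) :
    ENNReal.ofReal (lerayGap p x y) ^ (-(θ * ∑ j : {j // j ≠ i}, (p j : ℝ)⁻¹))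
      ≤ ∏ j, ‖halfProj i x j - halfProj i y j‖ₑ ^ (-θ) := by
  refine rpow_neg_mul_sum_le_prod_rpow_neg ENNReal.ofReal_ne_top hθ (fun j => by positivity)
    fun j => ?_
  rw [halfProj, halfProj, ← sub_div]
  exact enorm_half_sub_le_lerayGap_rpow hp hp0 hx hy j

end DecidableEq

theorem exists_setLIntegral_cap_lerayGap_rpow_neg_le (hp : ∀ k, Even (p k))
    (hp0 : ∀ k, p k ≠ 0) {s : ℝ} (hs0 : 0 ≤ s) (i : ι) (hs : s + (p i : ℝ)⁻¹ < ∑ k, (p k : ℝ)⁻¹)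
    (ε : ℤˣ) :
    ∃ C ≠ ∞, ∀ y ∈ superellipsoid p,
      ∫⁻ x in superellipsoidCap p i ε, ENNReal.ofReal (lerayGap p x y) ^ (-s)
        ∂μH[Fintype.card ι - 1] ≤ C := by
  classical
  obtain ⟨K, hK⟩ := exists_antilipschitzWith_halfProj_cap hp hp0 i ε
  set σ : ℝ := ∑ j : {j // j ≠ i}, (p j : ℝ)⁻¹ with hσ
  have hsσ : s < σ := by
    rw [Fintype.sum_eq_add_sum_subtype_ne _ i] at hs
    linarith
  have hσ0 : 0 < σ := hs0.trans_lt hsσ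
  have hθ : s / σ < 1 := (div_lt_one hσ0).2 hsσ
  have hdim : (Fintype.card ι : ℝ) - 1 = Fintype.card {j // j ≠ i} := by
    rw [Fintype.card_subtype_compl, Fintype.card_subtype_eq,
      Nat.cast_sub (Fintype.card_pos_iff.2 ⟨i⟩), Nat.cast_one]
  have hkernel := lintegral_ball_prod_enorm_rpow_neg_lt_top
    (θ := fun _ : {j // j ≠ i} => s / σ) (fun _ => hθ) two_pos
  refine ⟨_, ENNReal.mul_ne_top (ENNReal.rpow_ne_top_of_nonneg
    (Nat.cast_nonneg (Fintype.card {j // j ≠ i})) (ENNReal.coe_ne_top (r := K))) hkernel.ne,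
    fun y hy => ?_⟩
  rw [hdim]
  refine (setLIntegral_mono' (measurableSet_superellipsoidCap p i ε) fun x hx => ?_).trans
    (setLIntegral_prod_enorm_sub_rpow_neg_le (measurable_halfProj i) hK
      ((mapsTo_halfProj_ball hp hp0 hy i).mono_left fun x hx => hx.1) _)
  simpa only [← hσ, div_mul_cancel₀ s hσ0.ne'] using
    lerayGap_rpow_neg_le_prod_halfProj hp hp0 hx.1 hy i (div_nonneg hs0 hσ0.le)

theorem exists_setLIntegral_superellipsoid_lerayGap_rpow_neg_le (hp : ∀ k, Even (p k))
    (hp0 : ∀ k, p k ≠ 0) {s : ℝ} (hs0 : 0 ≤ s)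
    (hs : ∀ i, s + (p i : ℝ)⁻¹ < ∑ k, (p k : ℝ)⁻¹) :
    ∃ C ≠ ∞, ∀ y ∈ superellipsoid p,
      ∫⁻ x in superellipsoid p, ENNReal.ofReal (lerayGap p x y) ^ (-s) ∂μH[Fintype.card ι - 1]
        ≤ C := by
  choose C hC hbound using fun q : ι × ℤˣ =>
    exists_setLIntegral_cap_lerayGap_rpow_neg_le hp hp0 hs0 q.1 (hs q.1) q.2
  refine ⟨∑ q, C q, ENNReal.sum_ne_top.2 fun q _ => hC q, fun y hy => ?_⟩
  calc ∫⁻ x in superellipsoid p, ENNReal.ofReal (lerayGap p x y) ^ (-s) ∂μH[Fintype.card ι - 1]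
      ≤ ∫⁻ x in ⋃ q : ι × ℤˣ, superellipsoidCap p q.1 q.2,
          ENNReal.ofReal (lerayGap p x y) ^ (-s) ∂μH[Fintype.card ι - 1] :=
        lintegral_mono_set (superellipsoid_subset_iUnion_cap hp hp0)
    _ ≤ ∑ q : ι × ℤˣ, ∫⁻ x in superellipsoidCap p q.1 q.2,
          ENNReal.ofReal (lerayGap p x y) ^ (-s) ∂μH[Fintype.card ι - 1] :=
        (lintegral_iUnion_le _ _).trans_eq (tsum_fintype _)
    _ ≤ ∑ q, C q := Finset.sum_le_sum fun q _ => hbound q y hy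

end Superellipsoid

section RealCoordinates

/-- The identification `ℂ² ≅ ℝ⁴`, `(u₁ + iv₁, u₂ + iv₂) ↦ (u₁, v₁, u₂, v₂)`. The target carries the
sup metric, so this is bi-Lipschitz but not an isometry. -/
def realCoords (w : C2) : Fin 4 → ℝ := ![(w 0).re, (w 0).im, (w 1).re, (w 1).im]

/-- The exponents for which `realCoords` identifies `bD` with the superellipsoid
`u₁² + v₁⁴ + u₂² + v₂² = 1`. -/
def bDExponents : Fin 4 → ℕ := ![2, 4, 2, 2]

theorem even_bDExponents (k : Fin 4) : Even (bDExponents k) := by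
  revert k; decide

theorem two_le_bDExponents (k : Fin 4) : 2 ≤ bDExponents k := by
  revert k; decide

theorem sum_inv_bDExponents : ∑ k, (bDExponents k : ℝ)⁻¹ = 7 / 4 := by
  simp only [bDExponents, Fin.sum_univ_four, Fin.isValue, Matrix.cons_val]
  norm_num

theorem add_inv_bDExponents_lt_sum {s : ℝ} (hs : s < 5 / 4) (i : Fin 4) :
    s + (bDExponents i : ℝ)⁻¹ < ∑ k, (bDExponents k : ℝ)⁻¹ := by
  have hinv : (bDExponents i : ℝ)⁻¹ ≤ 2⁻¹ :=
    inv_anti₀ two_pos (by exact_mod_cast two_le_bDExponents i)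
  rw [sum_inv_bDExponents]
  linarith

theorem measurable_realCoords : Measurable realCoords := by
  refine (continuous_pi fun k => ?_ : Continuous realCoords).measurable
  fin_cases k <;> dsimp only [realCoords] <;> fun_prop

theorem antilipschitzWith_realCoords : AntilipschitzWith 2 realCoords := by
  refine .of_le_mul_dist fun w z => ?_
  set D := dist (realCoords w) (realCoords z)
  have hcoord : ∀ k, (realCoords w k - realCoords z k) ^ 2 ≤ D ^ 2 := fun k =>
    sq_le_sq.2 ((dist_le_pi_dist (realCoords w) (realCoords z) k).trans (le_abs_self _))
  have hsq : dist w z ^ 2 = ∑ k, (realCoords w k - realCoords z k) ^ 2 := by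
    rw [EuclideanSpace.dist_eq, Real.sq_sqrt (by positivity)]
    simp only [Fin.sum_univ_two, Fin.sum_univ_four, Complex.dist_eq, ← Complex.normSq_eq_norm_sq,
      Complex.normSq_apply, sub_re, sub_im, realCoords, Fin.isValue, Matrix.cons_val]
    ring
  refine (sq_le_sq₀ dist_nonneg (by positivity)).1 ?_
  calc dist w z ^ 2 = ∑ k, (realCoords w k - realCoords z k) ^ 2 := hsq
    _ ≤ ∑ _k : Fin 4, D ^ 2 := Finset.sum_le_sum fun k _ => hcoord k
    _ = (2 * D) ^ 2 := by
        rw [Finset.sum_const, Finset.card_univ, Fintype.card_fin, nsmul_eq_mul]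
        ring

theorem bD_eq_preimage_superellipsoid :
    bD = realCoords ⁻¹' superellipsoid bDExponents := by
  ext w
  simp only [bD, rho, superellipsoid, bDExponents, realCoords, mem_preimage, mem_ofPred_eq,
    Fin.sum_univ_four, ← Complex.normSq_eq_norm_sq, Complex.normSq_apply, Fin.isValue,
    Matrix.cons_val]
  constructor <;> intro h <;> linarith

theorem re_Delta_eq_lerayGap (w z : C2) :
    (Delta w z).re = lerayGap bDExponents (realCoords w) (realCoords z) := by
  simp only [Delta, ← ofReal_pow, add_re, sub_re, sub_im, mul_re, mul_im, ofReal_re, ofReal_im,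
    re_ofNat, im_ofNat, I_re, I_im, conj_re, conj_im, lerayGap, bDExponents, realCoords,
    Fin.sum_univ_four, Fin.isValue, Matrix.cons_val, Nat.cast_ofNat, Nat.add_one_sub_one]
  ring

end RealCoordinates

/-- For every `0 ≤ β < 1/4` there is `C_β < ∞` such that for every `z ∈ bD`:
`∫_{bD} (Re Δ(w,z))^{−(1+β)} dH³(w) ≤ C_β`  (the integrand is `+∞` at `w = z`). -/
theorem stmt6 (β : ℝ) (hβ0 : 0 ≤ β) (hβ : β < 1 / 4) :
    ∃ C : ℝ, ∀ z ∈ bD,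
      ∫⁻ w in bD, (ENNReal.ofReal (Delta w z).re) ^ (-(1 + β)) ∂μH[3]
        ≤ ENNReal.ofReal C := by
  obtain ⟨C, hC, hbound⟩ := exists_setLIntegral_superellipsoid_lerayGap_rpow_neg_le
    even_bDExponents (fun k => (two_pos.trans_le (two_le_bDExponents k)).ne')
    (by linarith : 0 ≤ 1 + β) (add_inv_bDExponents_lt_sum (by linarith))
  have hdim : ((Fintype.card (Fin 4) : ℕ) : ℝ) - 1 = 3 := by norm_num
  rw [hdim] at hbound
  have h2C : (2 : ℝ≥0∞) ^ (3 : ℝ) * C ≠ ∞ := ENNReal.mul_ne_top (by simp) hC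
  refine ⟨((2 : ℝ≥0∞) ^ (3 : ℝ) * C).toReal, fun z hz => ?_⟩
  rw [ENNReal.ofReal_toReal h2C]
  simp only [re_Delta_eq_lerayGap]
  rw [bD_eq_preimage_superellipsoid] at hz ⊢
  exact (setLIntegral_comp_hausdorffMeasure_le (by norm_num) measurable_realCoords
    (antilipschitzWith_realCoords.domRestrict _) (mapsTo_preimage _ _)
    ((measurable_lerayGap_left _ _).ennreal_ofReal.pow_const _)).trans
    (mul_le_mul_right (hbound _ hz) _)

end
end

section
/- For every β with 0 ≤ β < 1/4 there is a constant C < ∞ such that for every y₁ ∈ ℝ: ∫∫∫_{B} ( u₁² + u₂² + v₁²·(v₁−y₁)² )^{−(1+β)} du₁ dv₁ du₂ ≤ C, where B = {(u₁,v₁,u₂) ∈ ℝ³ : u₁² + v₁² + u₂² < 1} is the unit ball. -/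
open MeasureTheory
open scoped ENNReal

/-!
Put `α = 1 + β`, `a = 0`, `b = y₁`, and let `M = u₁² + u₂² + (v - a)² (v - b)²`. Since `M` dominates
each of `u₁²`, `u₂²` and `(min |v - a| |v - b|)⁴`, splitting `M ^ (-α)` into three powers of `M`
with exponents in the proportion `2 : 2 : 1` bounds it by
`|u₁| ^ (-s) * (|v - a| ^ (-s) + |v - b| ^ (-s)) * |u₂| ^ (-s)` with the single exponent
`s = 4 / 5 * α`. For `α < 5 / 4` we have `s < 1`, so each factor is locally integrable on the line,
with a bound that translation invariance makes independent of `a` and `b`.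
-/

section NormPower

variable {E : Type*} [NormedAddCommGroup E] [MeasurableSpace E] [BorelSpace E] {μ : Measure E}

lemma setLIntegral_ball_enorm_rpow_neg_lt_top [NormedSpace ℝ E] [FiniteDimensional ℝ E]
    [Nontrivial E] [μ.IsAddHaarMeasure] {s : ℝ} (hs : s < Module.finrank ℝ E) (r : ℝ) :
    ∫⁻ x in Metric.ball 0 r, ‖x‖ₑ ^ (-s) ∂μ < ∞ := by
  have integrable : IntegrableOn (fun x : E ↦ ‖x‖ ^ (-s)) (Metric.ball 0 r) μ :=
    integrableOn_ball_of_norm_le_rpow (C := 1) Module.finrank_pos hs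
      (.of_forall fun x ↦ by simp [Real.abs_rpow_of_nonneg])
      (measurable_norm.pow_const _).aestronglyMeasurable
  refine lt_of_eq_of_lt (lintegral_congr_ae (ae_restrict_of_ae ?_)) integrable.lintegral_lt_top
  filter_upwards [Measure.ae_ne μ 0] with x hx
  rw [← ofReal_norm, ENNReal.ofReal_rpow_of_pos (norm_pos_iff.2 hx)]

lemma setLIntegral_enorm_sub_rpow_neg_le [μ.IsAddRightInvariant] {s : ℝ} (hs : 0 ≤ s)
    (A : Set E) (y : E) :
    ∫⁻ x in A, ‖x - y‖ₑ ^ (-s) ∂μ ≤ μ A + ∫⁻ x in Metric.ball 0 1, ‖x‖ₑ ^ (-s) ∂μ := by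
  set near : E → ℝ≥0∞ := (Metric.ball 0 1).indicator fun x ↦ ‖x‖ₑ ^ (-s)
  have le_one_add_near (x : E) : ‖x‖ₑ ^ (-s) ≤ 1 + near x := by
    by_cases hx : x ∈ Metric.ball 0 1
    · simp only [near, Set.indicator_of_mem hx, le_add_self]
    · have one_le : 1 ≤ ‖x‖ₑ := by
        rw [← ofReal_norm, ENNReal.one_le_ofReal]
        simpa using hx
      have rpow_le_one : ‖x‖ₑ ^ (-s) ≤ 1 := by
        rw [ENNReal.rpow_neg, ENNReal.inv_le_one]
        exact ENNReal.one_rpow s ▸ ENNReal.rpow_le_rpow one_le hs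
      exact rpow_le_one.trans le_self_add
  calc ∫⁻ x in A, ‖x - y‖ₑ ^ (-s) ∂μ
      ≤ ∫⁻ x in A, (1 + near (x - y)) ∂μ := lintegral_mono fun x ↦ le_one_add_near (x - y)
    _ = μ A + ∫⁻ x in A, near (x - y) ∂μ := by
        rw [lintegral_add_left measurable_const, setLIntegral_one]
    _ ≤ μ A + ∫⁻ x, near (x - y) ∂μ := by gcongr; exact Measure.restrict_le_self
    _ = μ A + ∫⁻ x in Metric.ball 0 1, ‖x‖ₑ ^ (-s) ∂μ := by
        rw [lintegral_sub_right_eq_self near y, lintegral_indicator measurableSet_ball]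

lemma exists_forall_setLIntegral_enorm_sub_rpow_neg_le [NormedSpace ℝ E] [FiniteDimensional ℝ E]
    [μ.IsAddHaarMeasure] {s : ℝ} (hs0 : 0 ≤ s) (hs : s < Module.finrank ℝ E)
    {A : Set E} (hA : μ A ≠ ∞) :
    ∃ K : ℝ≥0∞, K ≠ ∞ ∧ ∀ y, ∫⁻ x in A, ‖x - y‖ₑ ^ (-s) ∂μ ≤ K := by
  have : Nontrivial E := Module.nontrivial_of_finrank_pos (R := ℝ) (mod_cast hs0.trans_lt hs)
  exact ⟨_, ENNReal.add_ne_top.2 ⟨hA, (setLIntegral_ball_enorm_rpow_neg_lt_top hs 1).ne⟩,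
    setLIntegral_enorm_sub_rpow_neg_le hs0 A⟩

end NormPower

lemma setLIntegral_prod_mul_mul {X Y Z : Type*} [MeasurableSpace X] [MeasurableSpace Y]
    [MeasurableSpace Z] {μ : Measure X} {ν : Measure Y} {τ : Measure Z} [SFinite μ] [SFinite ν]
    [SFinite τ] {f : X → ℝ≥0∞} {g : Y → ℝ≥0∞} {h : Z → ℝ≥0∞} (hf : Measurable f)
    (hg : Measurable g) (hh : Measurable h) (A : Set X) (B : Set Y) (C : Set Z) :
    ∫⁻ p in A ×ˢ B ×ˢ C, f p.1 * (g p.2.1 * h p.2.2) ∂μ.prod (ν.prod τ) =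
      (∫⁻ x in A, f x ∂μ) * ((∫⁻ y in B, g y ∂ν) * ∫⁻ z in C, h z ∂τ) := by
  rw [← Measure.prod_restrict, ← Measure.prod_restrict,
    lintegral_prod_mul hf.aemeasurable (g := fun q : Y × Z ↦ g q.1 * h q.2) (by fun_prop),
    lintegral_prod_mul hg.aemeasurable hh.aemeasurable]

lemma rpow_neg_add_of_nonneg (M : ℝ≥0∞) {r t : ℝ} (hr : 0 ≤ r) (ht : 0 ≤ t) :
    M ^ (-(r + t)) = M ^ (-r) * M ^ (-t) := by
  simp only [ENNReal.rpow_neg, ← ENNReal.inv_rpow]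
  exact ENNReal.rpow_add_of_nonneg r t hr ht

section Pointwise

variable {M s : ℝ}

lemma ofReal_rpow_neg_div_le_enorm_rpow_neg {x : ℝ} {n : ℕ} (hn : n ≠ 0) (hM : |x| ^ n ≤ M)
    (hs : 0 ≤ s) : ENNReal.ofReal M ^ (-(s / n)) ≤ ‖x‖ₑ ^ (-s) := by
  have enorm_pow_le : ‖x‖ₑ ^ n ≤ ENNReal.ofReal M := by
    rw [Real.enorm_eq_ofReal_abs, ← ENNReal.ofReal_pow (abs_nonneg x)]
    exact ENNReal.ofReal_le_ofReal hM
  rw [ENNReal.rpow_neg, ENNReal.rpow_neg, ENNReal.inv_le_inv]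
  calc ‖x‖ₑ ^ s = (‖x‖ₑ ^ n) ^ (s / n) := by
        rw [← ENNReal.rpow_natCast_mul, mul_div_cancel₀ s (Nat.cast_ne_zero.2 hn)]
    _ ≤ ENNReal.ofReal M ^ (s / n) := ENNReal.rpow_le_rpow enorm_pow_le (by positivity)

lemma ofReal_rpow_neg_half_le_enorm_rpow_neg {x : ℝ} (hM : x ^ 2 ≤ M) (hs : 0 ≤ s) :
    ENNReal.ofReal M ^ (-(s / 2)) ≤ ‖x‖ₑ ^ (-s) :=
  mod_cast ofReal_rpow_neg_div_le_enorm_rpow_neg two_ne_zero ((sq_abs x).trans_le hM) hs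

lemma ofReal_rpow_neg_quarter_le_enorm_rpow_neg_add {x z : ℝ} (hM : x ^ 2 * z ^ 2 ≤ M)
    (hs : 0 ≤ s) : ENNReal.ofReal M ^ (-(s / 4)) ≤ ‖x‖ₑ ^ (-s) + ‖z‖ₑ ^ (-s) := by
  wlog hxz : |x| ≤ |z| generalizing x z
  · rw [add_comm]
    exact this (by rwa [mul_comm]) (le_of_not_ge hxz)
  have pow_four_le : |x| ^ 4 ≤ M :=
    calc |x| ^ 4 = x ^ 2 * x ^ 2 := by rw [← sq_abs x]; ring
      _ ≤ x ^ 2 * z ^ 2 := mul_le_mul_of_nonneg_left (sq_le_sq.2 hxz) (sq_nonneg x)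
      _ ≤ M := hM
  have rpow_le : ENNReal.ofReal M ^ (-(s / 4)) ≤ ‖x‖ₑ ^ (-s) :=
    mod_cast ofReal_rpow_neg_div_le_enorm_rpow_neg four_ne_zero pow_four_le hs
  exact rpow_le.trans le_self_add

lemma ofReal_sq_add_sq_add_mul_rpow_neg_le (u w x z : ℝ) (hs : 0 ≤ s) :
    ENNReal.ofReal (u ^ 2 + w ^ 2 + x ^ 2 * z ^ 2) ^ (-(5 / 4 * s)) ≤
      ‖u‖ₑ ^ (-s) * ((‖x‖ₑ ^ (-s) + ‖z‖ₑ ^ (-s)) * ‖w‖ₑ ^ (-s)) := by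
  have hu := sq_nonneg u
  have hw := sq_nonneg w
  have hxz := mul_nonneg (sq_nonneg x) (sq_nonneg z)
  rw [show 5 / 4 * s = s / 2 + (s / 4 + s / 2) by ring,
    rpow_neg_add_of_nonneg _ (by positivity) (by positivity),
    rpow_neg_add_of_nonneg _ (by positivity) (by positivity)]
  gcongr
  · exact ofReal_rpow_neg_half_le_enorm_rpow_neg (by linarith) hs
  · exact ofReal_rpow_neg_quarter_le_enorm_rpow_neg_add (by linarith) hs
  · exact ofReal_rpow_neg_half_le_enorm_rpow_neg (by linarith) hs

end Pointwise

lemma isBounded_setOf_sq_add_sq_add_sq_lt (r : ℝ) :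
    Bornology.IsBounded {p : ℝ × ℝ × ℝ | p.1 ^ 2 + p.2.1 ^ 2 + p.2.2 ^ 2 < r} := by
  refine isBounded_iff_forall_norm_le.2 ⟨√r, fun p hp ↦ ?_⟩
  simp only [Set.mem_ofPred_eq] at hp
  simp only [norm_prod_le_iff, Real.norm_eq_abs]
  refine ⟨Real.abs_le_sqrt ?_, Real.abs_le_sqrt ?_, Real.abs_le_sqrt ?_⟩ <;>
    linarith [sq_nonneg p.1, sq_nonneg p.2.1, sq_nonneg p.2.2]

theorem stmt8_general {α : ℝ} (hα0 : 0 ≤ α) (hα : α < 5 / 4) {S : Set (ℝ × ℝ × ℝ)}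
    (hS : Bornology.IsBounded S) :
    ∃ C : ℝ, ∀ a b : ℝ,
      ∫⁻ p in S,
          (ENNReal.ofReal
              (p.1 ^ 2 + p.2.2 ^ 2 + (p.2.1 - a) ^ 2 * (p.2.1 - b) ^ 2)) ^ (-α)
        ≤ ENNReal.ofReal C := by
  obtain ⟨R, hR⟩ := hS.subset_closedBall 0
  set I : Set ℝ := Metric.closedBall 0 R
  have subset_cube : S ⊆ I ×ˢ I ×ˢ I := by
    rwa [closedBall_prod_same, closedBall_prod_same]
  set s : ℝ := 4 / 5 * α with hs_def
  have hs0 : 0 ≤ s := by positivity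
  have hs1 : s < 1 := by linarith
  obtain ⟨K, hK, integral_le⟩ := exists_forall_setLIntegral_enorm_sub_rpow_neg_le
    (μ := volume) (A := I) hs0 (by simpa using hs1) measure_closedBall_lt_top.ne
  have integral_zero_le : ∫⁻ x in I, ‖x‖ₑ ^ (-s) ≤ K := by simpa using integral_le 0
  refine ⟨(K * ((K + K) * K)).toReal, fun a b ↦ ?_⟩
  rw [ENNReal.ofReal_toReal (by finiteness), show α = 5 / 4 * s by ring]
  calc ∫⁻ p in S, _
      ≤ ∫⁻ p in I ×ˢ I ×ˢ I, ‖p.1‖ₑ ^ (-s) *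
          ((‖p.2.1 - a‖ₑ ^ (-s) + ‖p.2.1 - b‖ₑ ^ (-s)) * ‖p.2.2‖ₑ ^ (-s)) :=
        lintegral_mono' (Measure.restrict_mono_set _ subset_cube) fun p ↦
          ofReal_sq_add_sq_add_mul_rpow_neg_le _ _ _ _ hs0
    _ = (∫⁻ x in I, ‖x‖ₑ ^ (-s)) * (((∫⁻ x in I, ‖x - a‖ₑ ^ (-s)) +
          ∫⁻ x in I, ‖x - b‖ₑ ^ (-s)) * ∫⁻ x in I, ‖x‖ₑ ^ (-s)) := by
        have measurable_rpow (y : ℝ) : Measurable fun x : ℝ ↦ ‖x - y‖ₑ ^ (-s) := by fun_prop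
        have measurable_rpow_zero : Measurable fun x : ℝ ↦ ‖x‖ₑ ^ (-s) := by fun_prop
        rw [← lintegral_add_left (measurable_rpow a)]
        exact setLIntegral_prod_mul_mul measurable_rpow_zero
          ((measurable_rpow a).add (measurable_rpow b)) measurable_rpow_zero I I I
    _ ≤ K * ((K + K) * K) := by
        gcongr
        exacts [integral_le a, integral_le b]

/-- For every `0 ≤ β < 1/4` there is `C < ∞` such that for every `y₁ ∈ ℝ`:
`∫∫∫_B (u₁² + u₂² + v₁²(v₁−y₁)²)^{−(1+β)} du₁ dv₁ du₂ ≤ C`, where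
`B = {u₁² + v₁² + u₂² < 1}` is the unit ball of `ℝ³` (coordinates `p = (u₁, v₁, u₂)`);
the integrand is `+∞` where `u₁² + u₂² + v₁²(v₁−y₁)² = 0`. -/
theorem stmt8 (β : ℝ) (hβ0 : 0 ≤ β) (hβ : β < 1 / 4) :
    ∃ C : ℝ, ∀ y₁ : ℝ,
      ∫⁻ p in {p : ℝ × ℝ × ℝ | p.1 ^ 2 + p.2.1 ^ 2 + p.2.2 ^ 2 < 1},
          (ENNReal.ofReal
              (p.1 ^ 2 + p.2.2 ^ 2 + p.2.1 ^ 2 * (p.2.1 - y₁) ^ 2)) ^ (-(1 + β))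
        ≤ ENNReal.ofReal C := by
  obtain ⟨C, hC⟩ := stmt8_general (α := 1 + β) (by linarith) (by linarith)
    (isBounded_setOf_sq_add_sq_add_sq_lt 1)
  exact ⟨C, fun y₁ ↦ by simpa only [sub_zero] using hC 0 y₁⟩
end

section
/- Fix m ∈ (1,2). There exists a constant c > 0 such that for all w, z ∈ bD_m: Re Δ(w,z) ≥ c·|w−z|², where |w−z| is the Euclidean distance in ℂ² ≅ ℝ⁴. -/
open MeasureTheory Complex
open scoped ENNReal

noncomputable section

/-- The defining function `ρ(w) = |w₂|² + |Re w₁|^m + (Im w₁)² − 1`. -/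
def rhom (m : ℝ) (w : C2) : ℝ := ‖w 1‖ ^ 2 + |(w 0).re| ^ m + (w 0).im ^ 2 - 1

/-- The domain `D_m = {ρ < 0}`. -/
def Dm (m : ℝ) : Set C2 := {w | rhom m w < 0}

/-- The boundary `bD_m = {ρ = 0}`. -/
def bDm (m : ℝ) : Set C2 := {w | rhom m w = 0}

/-- The Cauchy–Leray denominator
`Δ(w,z) = ((m/2)|u₁|^{m−1}·sgn(u₁) − i v₁)(w₁−z₁) + conj(w₂)(w₂−z₂)`. -/
def Deltam (m : ℝ) (w z : C2) : ℂ :=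
  ((m / 2 * |(w 0).re| ^ (m - 1) * Real.sign (w 0).re : ℝ) - I * ((w 0).im : ℂ))
      * (w 0 - z 0)
    + (starRingEnd ℂ) (w 1) * (w 1 - z 1)

/-- The real gradient `∇ρ` on `ℝ⁴ ≅ ℂ²`, written as a vector in `ℂ²`:
`∇ρ(w) = (m|u₁|^{m−1} sgn(u₁) + 2i v₁, 2w₂)`. -/
def gradRhom (m : ℝ) (w : C2) : C2 :=
  (WithLp.equiv 2 (Fin 2 → ℂ)).symm
    ![(m * |(w 0).re| ^ (m - 1) * Real.sign (w 0).re : ℝ)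
        + (2 * (w 0).im : ℝ) * I, 2 * w 1]

/-- The inward unit normal `N(z) = −∇ρ(z)/|∇ρ(z)|`. -/
def Nm (m : ℝ) (z : C2) : C2 := (-‖gradRhom m z‖⁻¹ : ℝ) • gradRhom m z

/-!
On the strip `|Re w₁| ≤ 1`, which contains the closed domain, the defining function `ρ` is strongly
convex with modulus `m(m-1)`: its three quadratic coordinates have second derivative `2 ≥ m(m-1)`,
and `|u|^m` has second derivative `m(m-1)|u|^(m-2) ≥ m(m-1)` away from the origin. The quantity
`-2 Re Δ(w,z)` is the derivative of `ρ` at `w` in the direction `z - w`, so the first-order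
inequality for strongly convex functions reads `ρ(z) ≥ ρ(w) - 2 Re Δ(w,z) + m(m-1)/2 |w-z|²`.
-/

open Filter Set Topology

theorem add_lineDeriv_add_modulus_le_of_uniformConvexOn {E : Type*} [NormedAddCommGroup E]
    [NormedSpace ℝ E] {s : Set E} {φ : ℝ → ℝ} {f : E → ℝ} {f' : ℝ} {x y : E}
    (hf : UniformConvexOn s φ f) (hx : x ∈ s) (hy : y ∈ s) (hf' : HasLineDerivAt ℝ f f' x (y - x)) :
    f x + f' + φ ‖y - x‖ ≤ f y := by
  have slope_tendsto : Tendsto (fun t : ℝ ↦ t⁻¹ * (f (x + t • (y - x)) - f x)) (𝓝[>] 0)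
      (𝓝 f') := by
    simpa using! hf'.tendsto_slope_zero_right
  have bound_tendsto : Tendsto (fun t : ℝ ↦ f y - f x - (1 - t) * φ ‖y - x‖) (𝓝[>] 0)
      (𝓝 (f y - f x - φ ‖y - x‖)) :=
    (Continuous.tendsto' (by fun_prop) _ _ (by simp)).mono_left nhdsWithin_le_nhds
  have slope_le : ∀ᶠ t : ℝ in 𝓝[>] 0,
      t⁻¹ * (f (x + t • (y - x)) - f x) ≤ f y - f x - (1 - t) * φ ‖y - x‖ := by
    filter_upwards [Ioo_mem_nhdsGT one_pos] with t ⟨ht0, ht1⟩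
    have segment_eq : t • y + (1 - t) • x = x + t • (y - x) := by module
    have hconv := hf.2 hy hx ht0.le (sub_nonneg.2 ht1.le) (add_sub_cancel t 1)
    rw [segment_eq, smul_eq_mul, smul_eq_mul] at hconv
    rw [inv_mul_le_iff₀ ht0]
    linarith
  linarith [le_of_tendsto_of_tendsto slope_tendsto bound_tendsto slope_le]

theorem monotoneOn_Icc_neg_of_odd {α β : Type*} [AddCommGroup α] [LinearOrder α]
    [IsOrderedAddMonoid α] [AddCommGroup β] [PartialOrder β] [IsOrderedAddMonoid β] {f : α → β}
    {r : α} (hodd : f.Odd) (hmono : MonotoneOn f (Icc 0 r)) :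
    MonotoneOn f (Icc (-r) r) := by
  rcases lt_or_ge r 0 with hr | hr
  · rw [Icc_eq_empty (by simpa using hr)]
    exact subsingleton_empty.monotoneOn f
  have hmono_neg : MonotoneOn f (Icc (-r) 0) := fun x hx y hy hxy ↦ by
    have := hmono ⟨neg_nonneg.2 hy.2, neg_le.1 hy.1⟩ ⟨neg_nonneg.2 hx.2, neg_le.1 hx.1⟩
      (neg_le_neg hxy)
    rwa [hodd, hodd, neg_le_neg_iff] at this
  rw [← Icc_union_Icc_eq_Icc (neg_nonpos.2 hr) hr]
  exact hmono_neg.union_right hmono (isGreatest_Icc (neg_nonpos.2 hr)) (isLeast_Icc hr)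

theorem abs_rpow_sub_one_mul_sign (p x : ℝ) : |x| ^ (p - 1) * x.sign = |x| ^ (p - 2) * x := by
  rcases eq_or_ne x 0 with rfl | hx
  · simp
  · have abs_mul_sign : |x| * x.sign = x := by
      rcases hx.lt_or_gt with hx | hx
      · simp [abs_of_neg hx, Real.sign_of_neg hx]
      · simp [abs_of_pos hx, Real.sign_of_pos hx]
    rw [show p - 1 = p - 2 + 1 by ring, Real.rpow_add_one (abs_ne_zero.2 hx), mul_assoc,
      abs_mul_sign]

theorem hasDerivAt_abs_rpow_sign {p : ℝ} (hp : 1 < p) (x : ℝ) :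
    HasDerivAt (fun x : ℝ ↦ |x| ^ p) (p * |x| ^ (p - 1) * x.sign) x := by
  simpa only [mul_assoc, abs_rpow_sub_one_mul_sign] using hasDerivAt_abs_rpow x hp

theorem monotoneOn_rpow_sub_mul {a : ℝ} (ha0 : 0 ≤ a) (ha1 : a ≤ 1) :
    MonotoneOn (fun x : ℝ ↦ x ^ a - a * x) (Icc 0 1) := by
  refine monotoneOn_of_hasDerivWithinAt_nonneg (f' := fun x ↦ a * x ^ (a - 1) - a)
    (convex_Icc 0 1) (by fun_prop (disch := assumption)) ?_ ?_ <;> rw [interior_Icc]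
  · intro x hx
    simpa using! ((Real.hasDerivAt_rpow_const (Or.inl hx.1.ne')).sub
      ((hasDerivAt_id x).const_mul a)).hasDerivWithinAt
  · intro x hx
    have : 1 ≤ x ^ (a - 1) := Real.one_le_rpow_of_pos_of_le_one_of_nonpos hx.1 hx.2.le (by linarith)
    nlinarith

theorem monotoneOn_abs_rpow_mul_sign_sub_mul {a : ℝ} (ha0 : 0 < a) (ha1 : a ≤ 1) :
    MonotoneOn (fun x : ℝ ↦ |x| ^ a * x.sign - a * x) (Icc (-1) 1) := by
  refine monotoneOn_Icc_neg_of_odd (fun x ↦ ?_) ((monotoneOn_rpow_sub_mul ha0.le ha1).congr ?_)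
  · simp only [abs_neg, Real.sign_neg]
    ring
  · rintro x ⟨hx, -⟩
    rcases hx.eq_or_lt with rfl | hx
    · simp [ha0.ne']
    · simp [abs_of_pos hx, Real.sign_of_pos hx]

theorem strongConvexOn_abs_rpow {p : ℝ} (hp1 : 1 < p) (hp2 : p ≤ 2) :
    StrongConvexOn (Icc (-1) 1) (p * (p - 1)) fun x : ℝ ↦ |x| ^ p := by
  rw [strongConvexOn_iff_convex]
  simp only [Real.norm_eq_abs, sq_abs]
  have hderiv (x : ℝ) : HasDerivAt (fun x : ℝ ↦ |x| ^ p - p * (p - 1) / 2 * x ^ 2)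
      (p * (|x| ^ (p - 1) * x.sign - (p - 1) * x)) x := by
    refine ((hasDerivAt_abs_rpow_sign hp1 x).sub
      ((hasDerivAt_pow 2 x).const_mul (p * (p - 1) / 2))).congr_deriv ?_
    ring
  have hdiff := fun x ↦ (hderiv x).differentiableAt
  refine MonotoneOn.convexOn_of_deriv (convex_Icc _ _)
    (Differentiable.continuous hdiff).continuousOn (Differentiable.differentiableOn hdiff) ?_
  rw [funext fun x ↦ (hderiv x).deriv]
  exact fun x hx y hy hxy ↦ mul_le_mul_of_nonneg_left
    (monotoneOn_abs_rpow_mul_sign_sub_mul (sub_pos.2 hp1) (by linarith)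
      (interior_subset hx) (interior_subset hy) hxy) (zero_lt_one.trans hp1).le

theorem norm_smul_add_smul_sq_of_add_eq_one {E : Type*} [NormedAddCommGroup E]
    [InnerProductSpace ℝ E] {a b : ℝ} (hab : a + b = 1) (x y : E) :
    ‖a • x + b • y‖ ^ 2 = a * ‖x‖ ^ 2 + b * ‖y‖ ^ 2 - a * b * ‖x - y‖ ^ 2 := by
  obtain rfl := eq_sub_of_add_eq hab
  simp only [norm_add_sq_real, norm_sub_sq_real, norm_smul, real_inner_smul_left,
    real_inner_smul_right, mul_pow, Real.norm_eq_abs, sq_abs]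
  ring

section DefiningFunction

variable {m : ℝ}

theorem norm_sub_sq_eq_re_im_norm (w z : C2) :
    ‖w - z‖ ^ 2 = ((w 0).re - (z 0).re) ^ 2 + ((w 0).im - (z 0).im) ^ 2 + ‖w 1 - z 1‖ ^ 2 := by
  rw [EuclideanSpace.norm_sq_eq, Fin.sum_univ_two, Complex.sq_norm (_ : ℂ), Complex.normSq_apply]
  simp only [PiLp.sub_apply, sub_re, sub_im]
  ring

theorem abs_re_le_one_of_rhom_nonpos (hm : 0 < m) {w : C2} (hw : rhom m w ≤ 0) :
    |(w 0).re| ≤ 1 := by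
  contrapose! hw
  have := Real.one_lt_rpow hw hm
  unfold rhom
  nlinarith [sq_nonneg ‖w 1‖, sq_nonneg (w 0).im]

theorem strongConvexOn_rhom (hm1 : 1 < m) (hm2 : m ≤ 2) :
    StrongConvexOn {w : C2 | |(w 0).re| ≤ 1} (m * (m - 1)) (rhom m) := by
  have hre (a b : ℝ) (w z : C2) : ((a • w + b • z) 0).re = a • (w 0).re + b • (z 0).re := by simp
  refine ⟨fun w hw z hz a b ha hb hab ↦ ?_, fun w hw z hz a b ha hb hab ↦ ?_⟩
  · have := convex_Icc (-1 : ℝ) 1 (abs_le.1 hw) (abs_le.1 hz) ha hb hab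
    rwa [← hre, mem_Icc, ← abs_le] at this
  have re_part := (strongConvexOn_abs_rpow hm1 hm2).2 (abs_le.1 hw) (abs_le.1 hz) ha hb hab
  have im_part := norm_smul_add_smul_sq_of_add_eq_one hab (w 0).im (z 0).im
  have snd_part := norm_smul_add_smul_sq_of_add_eq_one hab (w 1) (z 1)
  have him : ((a • w + b • z) 0).im = a • (w 0).im + b • (z 0).im := by simp
  have hsnd : (a • w + b • z) 1 = a • w 1 + b • z 1 := by simp
  rw [← hre] at re_part
  rw [← him] at im_part
  rw [← hsnd] at snd_part
  have half_modulus_le_one : m * (m - 1) / 2 ≤ 1 := by nlinarith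
  have quadratic_gain := mul_le_mul_of_nonneg_right half_modulus_le_one
    (show 0 ≤ a * b * (((w 0).im - (z 0).im) ^ 2 + ‖w 1 - z 1‖ ^ 2) by positivity)
  simp only [smul_eq_mul, Real.norm_eq_abs, sq_abs, rhom, norm_sub_sq_eq_re_im_norm]
    at re_part im_part snd_part ⊢
  obtain rfl := eq_sub_of_add_eq hab
  linarith

theorem re_Deltam (m : ℝ) (w z : C2) :
    (Deltam m w z).re =
      m / 2 * |(w 0).re| ^ (m - 1) * Real.sign (w 0).re * ((w 0).re - (z 0).re)
        + (w 0).im * ((w 0).im - (z 0).im)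
        + ((w 1).re * ((w 1).re - (z 1).re) + (w 1).im * ((w 1).im - (z 1).im)) := by
  simp only [Deltam, add_re, mul_re, sub_re, sub_im, mul_im, ofReal_re, ofReal_im, I_re, I_im,
    conj_re, conj_im]
  ring

theorem hasLineDerivAt_rhom (hm : 1 < m) (w z : C2) :
    HasLineDerivAt ℝ (rhom m) (-2 * (Deltam m w z).re) w (z - w) := by
  have affine (x y : ℝ) : HasDerivAt (fun t : ℝ ↦ x + t * (y - x)) (y - x) 0 := by
    simpa using ((hasDerivAt_id (0 : ℝ)).mul_const (y - x)).const_add x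
  have re_part : HasDerivAt (fun t : ℝ ↦ |(w 0).re + t * ((z 0).re - (w 0).re)| ^ m) _ 0 :=
    (hasDerivAt_abs_rpow_sign hm _).comp 0 (affine _ _)
  have rhom_line (t : ℝ) : rhom m (w + t • (z - w)) =
      ((w 1).re + t * ((z 1).re - (w 1).re)) ^ 2 + ((w 1).im + t * ((z 1).im - (w 1).im)) ^ 2
        + |(w 0).re + t * ((z 0).re - (w 0).re)| ^ m
        + ((w 0).im + t * ((z 0).im - (w 0).im)) ^ 2 - 1 := by
    simp [rhom, Complex.sq_norm, Complex.normSq_apply, ← pow_two]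
  unfold HasLineDerivAt
  rw [funext rhom_line]
  refine (((((affine _ _).pow 2).add ((affine _ _).pow 2)).add re_part).add
    ((affine _ _).pow 2)).sub_const 1 |>.congr_deriv ?_
  simp only [re_Deltam, zero_mul, add_zero]
  ring

end DefiningFunction

theorem stmt13_general (m : ℝ) (hm1 : 1 < m) (hm2 : m ≤ 2) (w z : C2)
    (hw : |(w 0).re| ≤ 1) (hz : |(z 0).re| ≤ 1) :
    (rhom m w - rhom m z) / 2 + m * (m - 1) / 4 * ‖w - z‖ ^ 2 ≤ (Deltam m w z).re := by
  have first_order := add_lineDeriv_add_modulus_le_of_uniformConvexOn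
    (strongConvexOn_rhom hm1 hm2) hw hz (hasLineDerivAt_rhom hm1 w z)
  rw [norm_sub_rev] at first_order
  linarith

/-- Fix `m ∈ (1,2)`. There is `c > 0` such that for all `w, z ∈ bD_m`:
`Re Δ(w,z) ≥ c·|w−z|²` (Euclidean distance in `ℂ² ≅ ℝ⁴`). -/
theorem stmt13 (m : ℝ) (hm1 : 1 < m) (hm2 : m < 2) :
    ∃ c : ℝ, 0 < c ∧ ∀ w ∈ bDm m, ∀ z ∈ bDm m,
      c * ‖w - z‖ ^ 2 ≤ (Deltam m w z).re := by
  refine ⟨m * (m - 1) / 4, by nlinarith, fun w hw z hz ↦ ?_⟩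
  have abs_re_le_one {x : C2} (hx : x ∈ bDm m) : |(x 0).re| ≤ 1 :=
    abs_re_le_one_of_rhom_nonpos (by linarith) hx.le
  simpa [hw.out, hz.out] using
    stmt13_general m hm1 hm2.le w z (abs_re_le_one hw) (abs_re_le_one hz)

end
end
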